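/- arXiv:2310.11006 — 3 statements merged into one kernel-verified Lean document; each statement's English description precedes it below -/
import Mathlib

section
/- In every MV-algebra A, for all x,y ∈ A the identities x⊖x = 0, x⊕¬x = 1, and (x⊖y)⊕((x⊕¬y)⊙y) = x hold. Consequently the binary terms t₁(x,y):=x⊖y, t₂(x,y):=x⊕¬y together with the ternary term t(x,y,z):=x⊕(y⊙z) satisfy t₁(x,x)=0, t₂(x,x)=1 and t(t₁(x,y),t₂(x,y),y)=x, i.e. they are protomodularity terms for the variety of MV-algebras. -/
namespace MVPaper

/-- An MV-algebra: a set with a binary `⊕`, a unary `¬`, and a constant `0`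
satisfying the MV-algebra axioms. -/
class MV (α : Type*) where
  oplus : α → α → α
  neg : α → α
  zero : α
  oplus_assoc : ∀ x y z : α, oplus x (oplus y z) = oplus (oplus x y) z
  oplus_comm : ∀ x y : α, oplus x y = oplus y x
  oplus_zero : ∀ x : α, oplus x zero = x
  neg_neg : ∀ x : α, neg (neg x) = x
  oplus_neg_zero : ∀ x : α, oplus x (neg zero) = neg zero
  lukasiewicz : ∀ x y : α,
    oplus (neg (oplus (neg x) y)) y = oplus (neg (oplus (neg y) x)) x

namespace MV

variable {α : Type*} [MV α]

/-- `1 := ¬0`. -/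
def one : α := neg zero

/-- `x ⊙ y := ¬(¬x ⊕ ¬y)`. -/
def odot (x y : α) : α := neg (oplus (neg x) (neg y))

/-- `x ⊖ y := ¬(¬x ⊕ y)`. -/
def ominus (x y : α) : α := neg (oplus (neg x) y)

/-- `d(x,y) := (x ⊖ y) ⊕ (y ⊖ x)`. -/
def dist (x y : α) : α := oplus (ominus x y) (ominus y x)

/-- The natural order: `x ≤ y` iff `¬x ⊕ y = 1`. -/
def le (x y : α) : Prop := oplus (neg x) y = one

/-- `x ∨ y := (x ⊖ y) ⊕ y`. -/
def sup (x y : α) : α := oplus (ominus x y) y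

/-- `x ∧ y := x ⊙ (¬x ⊕ y)`. -/
def inf (x y : α) : α := odot x (oplus (neg x) y)

/-- `n · a`, the `n`-fold sum `a ⊕ ⋯ ⊕ a`. -/
def nsmul : ℕ → α → α
  | 0, _ => zero
  | n + 1, a => oplus a (nsmul n a)

end MV

/-- Products of MV-algebras, with componentwise operations. -/
instance prodMV {α β : Type*} [MV α] [MV β] : MV (α × β) where
  oplus x y := (MV.oplus x.1 y.1, MV.oplus x.2 y.2)
  neg x := (MV.neg x.1, MV.neg x.2)
  zero := (MV.zero, MV.zero)
  oplus_assoc x y z :=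
    congrArg₂ Prod.mk (MV.oplus_assoc _ _ _) (MV.oplus_assoc _ _ _)
  oplus_comm x y :=
    congrArg₂ Prod.mk (MV.oplus_comm _ _) (MV.oplus_comm _ _)
  oplus_zero x := by
    obtain ⟨a, b⟩ := x
    exact congrArg₂ Prod.mk (MV.oplus_zero a) (MV.oplus_zero b)
  neg_neg x := by
    obtain ⟨a, b⟩ := x
    exact congrArg₂ Prod.mk (MV.neg_neg a) (MV.neg_neg b)
  oplus_neg_zero x :=
    congrArg₂ Prod.mk (MV.oplus_neg_zero _) (MV.oplus_neg_zero _)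
  lukasiewicz x y :=
    congrArg₂ Prod.mk (MV.lukasiewicz _ _) (MV.lukasiewicz _ _)

/-- A homomorphism of MV-algebras: a map preserving `⊕`, `¬` and `0`. -/
structure IsHom {α β : Type*} [MV α] [MV β] (f : α → β) : Prop where
  map_zero : f MV.zero = MV.zero
  map_oplus : ∀ x y : α, f (MV.oplus x y) = MV.oplus (f x) (f y)
  map_neg : ∀ x : α, f (MV.neg x) = MV.neg (f x)

/-- An ideal of an MV-algebra: contains `0`, closed under `⊕`, downward closed. -/
structure IsIdeal {α : Type*} [MV α] (I : Set α) : Prop where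
  zero_mem : MV.zero ∈ I
  oplus_mem : ∀ ⦃x⦄, x ∈ I → ∀ ⦃y⦄, y ∈ I → MV.oplus x y ∈ I
  lower_mem : ∀ ⦃x⦄, x ∈ I → ∀ ⦃y⦄, MV.le y x → y ∈ I

/-- The kernel of a homomorphism. -/
def ker {α β : Type*} [MV α] [MV β] (f : α → β) : Set α := {x | f x = MV.zero}

/-- The radical of an MV-algebra: `Rad(A) = {a | n·a ≤ ¬a for all n}`
(the intersection of all maximal proper ideals). -/
def Rad (α : Type*) [MV α] : Set α :=
  {a | ∀ n : ℕ, MV.le (MV.nsmul n a) (MV.neg a)}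

/-- `P(A) := Rad(A) ∪ ¬Rad(A)`. -/
def PSet (α : Type*) [MV α] : Set α :=
  Rad α ∪ {x | MV.neg x ∈ Rad α}

/-- An MV-algebra is trivial if `0 = 1`. -/
def IsTrivial (α : Type*) [MV α] : Prop := (MV.zero : α) = MV.one

/-- An MV-algebra is semisimple if its radical is trivial. -/
def Semisimple (α : Type*) [MV α] : Prop := Rad α = ({MV.zero} : Set α)

/-- An MV-algebra is perfect if `A = Rad(A) ∪ ¬Rad(A)`. -/
def Perfect (α : Type*) [MV α] : Prop := ∀ a : α, a ∈ PSet α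

/-- `q : α → Q` realizes `Q` as the quotient of `α` by the ideal `I`,
i.e. by the congruence `x ∼ y ↔ d(x,y) ∈ I`. -/
structure IsQuotientBy {α Q : Type*} [MV α] [MV Q] (I : Set α) (q : α → Q) : Prop where
  hom : IsHom q
  surj : Function.Surjective q
  eq_iff : ∀ x y : α, q x = q y ↔ MV.dist x y ∈ I

/-- `t₁(x,y) := x ⊖ y`. -/
def t1 {α : Type*} [MV α] (x y : α) : α := MV.ominus x y

/-- `t₂(x,y) := x ⊕ ¬y`. -/
def t2 {α : Type*} [MV α] (x y : α) : α := MV.oplus x (MV.neg y)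

/-- `t(x,y,z) := x ⊕ (y ⊙ z)`. -/
def t {α : Type*} [MV α] (x y z : α) : α := MV.oplus x (MV.odot y z)

/-! Since `x ∧ y` unfolds to `x ⊖ (x ⊖ y)`, the sum `(x ⊖ y) ⊕ (x ∧ y)` is the join `x ∨ (x ⊖ y)`,
which equals `x` because `x ⊖ y ≤ x`. Now `(x ⊕ ¬y) ⊙ y` is `y ∧ x`, and `∧` is commutative because
it is De Morgan dual to `∨`, whose commutativity is `lukasiewicz`. -/

namespace MV

variable {α : Type*} [MV α]

theorem neg_one : neg (one : α) = zero := neg_neg zero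

theorem zero_oplus (x : α) : oplus zero x = x :=
  (oplus_comm zero x).trans (oplus_zero x)

theorem oplus_one (x : α) : oplus x one = one := oplus_neg_zero x

theorem sup_comm (x y : α) : sup x y = sup y x := lukasiewicz x y

theorem oplus_neg_self (x : α) : oplus x (neg x) = one :=
  calc
    oplus x (neg x) = oplus (neg x) x := oplus_comm _ _
    _ = sup one x := by rw [sup, ominus, neg_one, zero_oplus]
    _ = sup x one := sup_comm _ _
    _ = one := oplus_one _

theorem ominus_self (x : α) : ominus x x = zero := by
  rw [ominus, oplus_comm, oplus_neg_self, neg_one]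

theorem ominus_le_self (x y : α) : le (ominus x y) x :=
  calc
    oplus (neg (ominus x y)) x = oplus (oplus y (neg x)) x := by
      rw [ominus, neg_neg, oplus_comm (neg x)]
    _ = oplus y (oplus x (neg x)) := by rw [← oplus_assoc, oplus_comm (neg x)]
    _ = one := by rw [oplus_neg_self, oplus_one]

theorem sup_of_le_left {x y : α} (h : le y x) : sup x y = x := by
  rw [le] at h
  rw [sup_comm, sup, ominus, h, neg_one, zero_oplus]

theorem neg_sup (x y : α) : neg (sup x y) = inf (neg x) (neg y) := by
  rw [sup_comm, sup, ominus, inf, odot, neg_neg, oplus_comm x (neg y), oplus_comm x]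

theorem inf_comm (x y : α) : inf x y = inf y x := by
  have h := congrArg neg (sup_comm (neg x) (neg y))
  simpa only [neg_sup, neg_neg] using h

theorem odot_comm (x y : α) : odot x y = odot y x :=
  congrArg neg (oplus_comm _ _)

theorem ominus_ominus_right_self (x y : α) : ominus x (ominus x y) = inf x y := rfl

theorem oplus_neg_odot_self (x y : α) : odot (oplus x (neg y)) y = inf y x := by
  rw [odot_comm, oplus_comm, inf]

theorem ominus_oplus_inf (x y : α) : oplus (ominus x y) (inf x y) = x :=
  calc
    oplus (ominus x y) (inf x y) = oplus (ominus x (ominus x y)) (ominus x y) := by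
      rw [ominus_ominus_right_self, oplus_comm]
    _ = sup x (ominus x y) := rfl
    _ = x := sup_of_le_left (ominus_le_self x y)

theorem ominus_oplus_oplus_neg_odot_self (x y : α) :
    oplus (ominus x y) (odot (oplus x (neg y)) y) = x := by
  rw [oplus_neg_odot_self, inf_comm, ominus_oplus_inf]

end MV

/-- In every MV-algebra the identities `x ⊖ x = 0`, `x ⊕ ¬x = 1` and
`(x ⊖ y) ⊕ ((x ⊕ ¬y) ⊙ y) = x` hold; hence `t₁, t₂, t` are protomodularity
terms for the variety of MV-algebras. -/
theorem protomodularity_terms {α : Type*} [MV α] (x y : α) :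
    MV.ominus x x = MV.zero ∧
    MV.oplus x (MV.neg x) = MV.one ∧
    MV.oplus (MV.ominus x y) (MV.odot (MV.oplus x (MV.neg y)) y) = x ∧
    t1 x x = MV.zero ∧ t2 x x = MV.one ∧ t (t1 x y) (t2 x y) y = x :=
  ⟨MV.ominus_self x, MV.oplus_neg_self x, MV.ominus_oplus_oplus_neg_odot_self x y,
    MV.ominus_self x, MV.oplus_neg_self x, MV.ominus_oplus_oplus_neg_odot_self x y⟩

end MVPaper
end

section
/- Let A be a perfect MV-algebra, B a semisimple MV-algebra with B nontrivial, and f: A → B a homomorphism. Then for every a ∈ A: if a ∈ Rad(A) then f(a)=0, and if a ∈ ¬Rad(A) then f(a)=1. In particular f factors through the two-element Boolean subalgebra {0,1} of B. -/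
namespace MVPaper

namespace IsHom

variable {α β : Type*} [MV α] [MV β] {f : α → β}

theorem map_one (hf : IsHom f) : f MV.one = MV.one :=
  (hf.map_neg MV.zero).trans (congrArg MV.neg hf.map_zero)

theorem map_nsmul (hf : IsHom f) (n : ℕ) (a : α) :
    f (MV.nsmul n a) = MV.nsmul n (f a) := by
  induction n with
  | zero => exact hf.map_zero
  | succ n ih => rw [MV.nsmul, MV.nsmul, hf.map_oplus, ih]

theorem map_le (hf : IsHom f) {x y : α} (hxy : MV.le x y) : MV.le (f x) (f y) :=
  calc MV.oplus (MV.neg (f x)) (f y)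
    _ = f (MV.oplus (MV.neg x) y) := by rw [hf.map_oplus, hf.map_neg]
    _ = f MV.one := congrArg f hxy
    _ = MV.one := hf.map_one

theorem mapsTo_rad (hf : IsHom f) : Set.MapsTo f (Rad α) (Rad β) := fun a ha n ↦ by
  rw [← hf.map_nsmul, ← hf.map_neg]
  exact hf.map_le (ha n)

theorem rad_subset_ker (hf : IsHom f) (hB : Semisimple β) : Rad α ⊆ ker f :=
  fun _ ha ↦ Set.mem_singleton_iff.mp (hB.subset (hf.mapsTo_rad ha))

theorem map_eq_one_of_neg_mem_ker (hf : IsHom f) {a : α} (ha : MV.neg a ∈ ker f) :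
    f a = MV.one :=
  calc f a
    _ = f (MV.neg (MV.neg a)) := by rw [MV.neg_neg]
    _ = MV.neg (f (MV.neg a)) := hf.map_neg _
    _ = MV.one := congrArg MV.neg ha

end IsHom

theorem perfect_to_semisimple_trivial_general {α β : Type*} [MV α] [MV β]
    (hB : Semisimple β) {f : α → β} (hf : IsHom f) :
    (∀ a : α, a ∈ Rad α → f a = MV.zero) ∧
    (∀ a : α, MV.neg a ∈ Rad α → f a = MV.one) ∧
    (∀ a : α, a ∈ PSet α → f a = MV.zero ∨ f a = MV.one) := by
  have map_rad (a : α) (ha : a ∈ Rad α) : f a = MV.zero := hf.rad_subset_ker hB ha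
  have map_corad (a : α) (ha : MV.neg a ∈ Rad α) : f a = MV.one :=
    hf.map_eq_one_of_neg_mem_ker (hf.rad_subset_ker hB ha)
  exact ⟨map_rad, map_corad, fun a ha ↦ ha.imp (map_rad a) (map_corad a)⟩

/-- Any homomorphism from a perfect MV-algebra to a nontrivial semisimple
MV-algebra sends the radical to `0` and the coradical to `1`; in particular it
factors through the two-element Boolean subalgebra `{0,1}`. -/
theorem perfect_to_semisimple_trivial {α β : Type*} [MV α] [MV β]
    (hA : Perfect α) (hB : Semisimple β) (hBnt : ¬ IsTrivial β)
    {f : α → β} (hf : IsHom f) :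
    (∀ a : α, a ∈ Rad α → f a = MV.zero) ∧
    (∀ a : α, MV.neg a ∈ Rad α → f a = MV.one) ∧
    (∀ a : α, f a = MV.zero ∨ f a = MV.one) := by
  obtain ⟨map_rad, map_corad, map_perfect⟩ := perfect_to_semisimple_trivial_general hB hf
  exact ⟨map_rad, map_corad, fun a ↦ map_perfect a (hA a)⟩

end MVPaper
end

section
/- Let A be an MV-algebra and x, y, z ∈ A with x ≤ y⊕z. Then there exist y₁, z₁ ∈ A with y₁ ≤ y, z₁ ≤ z, and x = y₁⊕z₁ (Riesz decomposition property for MV-algebras). -/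
namespace MVPaper

/-! Split `x` into `x ∧ y` and the excess `x ⊖ y`, which is below `z` by residuation. Since
`x ∧ y = x ⊖ (x ⊖ y)`, residuation turns `x ∧ y ≤ y` into `x ≤ x ∨ y`, and the sum of the two parts
is `x ∨ (x ⊖ y) = x`. -/

namespace MV

variable {α : Type*} [MV α]

theorem one_oplus (x : α) : oplus one x = one := by
  rw [oplus_comm, one, oplus_neg_zero]

theorem neg_oplus_self (x : α) : oplus (neg x) x = one :=
  calc
    oplus (neg x) x = sup one x := by rw [sup, ominus, neg_one, zero_oplus]
    _ = sup x one := sup_comm one x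
    _ = one := oplus_neg_zero _

theorem le_oplus_self (x y : α) : le x (oplus y x) := by
  rw [le, oplus_comm y, oplus_assoc, neg_oplus_self, one_oplus]

theorem ominus_le_iff (x y z : α) : le (ominus x y) z ↔ le x (oplus y z) := by
  rw [le, le, ominus, neg_neg, oplus_assoc]

theorem le_sup_left (x y : α) : le x (sup x y) := by
  rw [sup_comm]
  exact le_oplus_self x (ominus y x)

theorem inf_eq_ominus_ominus (x y : α) : inf x y = ominus x (ominus x y) := by
  rw [inf, odot, ominus, ominus]

theorem inf_le_right (x y : α) : le (inf x y) y := by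
  rw [inf_eq_ominus_ominus, ominus_le_iff]
  exact le_sup_left x y

theorem inf_oplus_ominus (x y : α) : oplus (inf x y) (ominus x y) = x := by
  rw [inf_eq_ominus_ominus]
  exact sup_of_le_left (ominus_le_self x y)

end MV

/-- Riesz decomposition property for MV-algebras: if `x ≤ y ⊕ z` then there
exist `y₁ ≤ y` and `z₁ ≤ z` with `x = y₁ ⊕ z₁`. -/
theorem riesz_decomposition {α : Type*} [MV α] (x y z : α)
    (h : MV.le x (MV.oplus y z)) :
    ∃ y₁ z₁ : α, MV.le y₁ y ∧ MV.le z₁ z ∧ x = MV.oplus y₁ z₁ :=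
  ⟨MV.inf x y, MV.ominus x y, MV.inf_le_right x y, (MV.ominus_le_iff x y z).2 h,
    (MV.inf_oplus_ominus x y).symm⟩

end MVPaper
end
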